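/- Let F be a Kripke frame with a finite set of worlds W (with arbitrary accessibility relation) and possibly infinite domains. If satisfiability of monadic first-order modal formulas with equality over F is reducible to a decidable fragment by the bounded-world structure, then the monadic fragment with equality of the modal logic of F is algorithmically decidable. In particular: the set of monadic modal formulas with equality valid in every model based on a fixed finite-world Kripke frame F is decidable. -/

import Mathlib

/-- Monadic modal formulas with equality: unary predicate letters, propositional
letters, and equality. -/
inductive MMF : Type
  | pred : ℕ → ℕ → MMF          -- unary predicate letter applied to a variable
  | prop : ℕ → MMF              -- propositional letter
  | eq : ℕ → ℕ → MMF            -- equality of variables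
  | fls : MMF
  | imp : MMF → MMF → MMF
  | and : MMF → MMF → MMF
  | or : MMF → MMF → MMF
  | box : MMF → MMF
  | all : ℕ → MMF → MMF
  | ex : ℕ → MMF → MMF

/-- Satisfaction over a Kripke frame `(W, R, (Dom w))` (equality read as identity),
with valuation `Vp` for unary predicate letters and `Vq` for propositional letters. -/
def MMFSat {W D : Type} (R : W → W → Prop) (Dom : W → Set D)
    (Vp : ℕ → W → D → Prop) (Vq : ℕ → W → Prop) : W → (ℕ → D) → MMF → Prop
  | w, σ, .pred p x => Vp p w (σ x)
  | w, _, .prop p => Vq p w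
  | _, σ, .eq x y => σ x = σ y
  | _, _, .fls => False
  | w, σ, .imp φ ψ => MMFSat R Dom Vp Vq w σ φ → MMFSat R Dom Vp Vq w σ ψ
  | w, σ, .and φ ψ => MMFSat R Dom Vp Vq w σ φ ∧ MMFSat R Dom Vp Vq w σ ψ
  | w, σ, .or φ ψ => MMFSat R Dom Vp Vq w σ φ ∨ MMFSat R Dom Vp Vq w σ ψ
  | w, σ, .box φ => ∀ v, R w v → MMFSat R Dom Vp Vq v σ φ
  | w, σ, .all x φ => ∀ d ∈ Dom w, MMFSat R Dom Vp Vq w (Function.update σ x d) φ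
  | w, σ, .ex x φ => ∃ d ∈ Dom w, MMFSat R Dom Vp Vq w (Function.update σ x d) φ

/-- Validity in the frame: truth at every world under every valuation and every
assignment into the world's domain. -/
def MMFValid {W D : Type} (R : W → W → Prop) (Dom : W → Set D) (φ : MMF) : Prop :=
  ∀ (Vp : ℕ → W → D → Prop) (Vq : ℕ → W → Prop) (w : W) (σ : ℕ → D),
    (∀ k, σ k ∈ Dom w) → MMFSat R Dom Vp Vq w σ φ

/-- An injective numerical coding of monadic modal formulas with equality. -/
def encodeMMF : MMF → ℕ
  | .pred p x => Nat.pair 0 (Nat.pair p x)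
  | .prop p => Nat.pair 1 p
  | .eq x y => Nat.pair 2 (Nat.pair x y)
  | .fls => Nat.pair 3 0
  | .imp φ ψ => Nat.pair 4 (Nat.pair (encodeMMF φ) (encodeMMF ψ))
  | .and φ ψ => Nat.pair 5 (Nat.pair (encodeMMF φ) (encodeMMF ψ))
  | .or φ ψ => Nat.pair 6 (Nat.pair (encodeMMF φ) (encodeMMF ψ))
  | .box φ => Nat.pair 7 (encodeMMF φ)
  | .all x φ => Nat.pair 8 (Nat.pair x (encodeMMF φ))
  | .ex x φ => Nat.pair 9 (Nat.pair x (encodeMMF φ))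

/-!
Colour each element by the set of worlds it inhabits and by where it has each of the first `N`
unary predicates. A back-and-forth argument shows that a formula whose letters and variables have
indices below `N` cannot tell apart two models whose colour classes have the same sizes up to `N`:
at most `N` elements are named at any time, so a class of size at least `N` always offers a fresh
element when one is needed. A class of elements inhabiting the same worlds splits into boundedly
many colours, so truncating these classes at a size computed from `N` preserves validity. The finite
frame obtained carries finitely many models as far as the formula is concerned, and they can be
listed and checked by primitive recursion on the code of the formula. The truncated sizes are
finitely much data about the given frame, so it does not matter that they are not computed from it.
-/

section Cardinality

open Set

variable {α β γ K : Type*}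

/-- Two sets have equally many elements as far as counting up to `n` can tell: their cardinalities
are equal or both at least `n`. -/
def EqCardUpTo (n : ℕ) (s : Set α) (t : Set β) : Prop :=
  min s.encard n = min t.encard n

namespace EqCardUpTo

variable {m n : ℕ} {s : Set α} {t : Set β}

theorem symm (h : EqCardUpTo n s t) : EqCardUpTo n t s :=
  Eq.symm h

theorem le_encard (h : EqCardUpTo n s t) {k : ℕ∞} (hkn : k ≤ n) (hks : k ≤ s.encard) :
    k ≤ t.encard :=
  (le_min hks hkn).trans (h.le.trans (min_le_left _ _))

theorem nonempty (h : EqCardUpTo n s t) (hn : 0 < n) (hs : s.Nonempty) : t.Nonempty :=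
  one_le_encard_iff_nonempty.1 <|
    h.le_encard (by exact_mod_cast hn) (one_le_encard_iff_nonempty.2 hs)

theorem encard_eq_or_le (h : EqCardUpTo n s t) :
    s.encard = t.encard ∧ s.Finite ∨ n ≤ s.encard ∧ n ≤ t.encard := by
  rcases le_or_gt (n : ℕ∞) s.encard with hs | hs
  · exact .inr ⟨hs, h.le_encard le_rfl hs⟩
  · have ht : t.encard < n := not_le.1 fun ht => hs.not_ge (h.symm.le_encard le_rfl ht)
    exact .inl ⟨by simpa only [EqCardUpTo, min_eq_left hs.le, min_eq_left ht.le] using h,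
      encard_lt_top_iff.1 (hs.trans (ENat.natCast_lt_top n))⟩

theorem exists_subset_of_le (hs : n ≤ (s : Set α).encard) (ht : ↑(m + n) ≤ t.encard) (u : Set γ) :
    ∃ v ⊆ t, EqCardUpTo m u v ∧ EqCardUpTo n s (t \ v) := by
  have hm : min u.encard m ≤ (m : ℕ∞) := min_le_right _ _
  obtain ⟨v, hvt, hv⟩ := exists_subset_encard_eq
    ((hm.trans (by exact_mod_cast Nat.le_add_right m n)).trans ht)
  have hvm : v.encard ≤ m := hv ▸ hm
  have hdiff : n ≤ (t \ v).encard := by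
    rw [← ENat.add_le_add_iff_right (ENat.natCast_ne_top m)]
    calc (n : ℕ∞) + m ≤ t.encard := by rwa [add_comm, ← Nat.cast_add]
      _ = (t \ v).encard + v.encard := (encard_sdiff_add_encard_of_subset hvt).symm
      _ ≤ (t \ v).encard + m := by gcongr
  refine ⟨v, hvt, ?_, ?_⟩
  · rw [EqCardUpTo, hv, min_assoc, min_self]
  · rw [EqCardUpTo, min_eq_right hs, min_eq_right hdiff]

theorem exists_subset (h : EqCardUpTo (m + n) s t) {a : Set α} (has : a ⊆ s) :
    ∃ b ⊆ t, EqCardUpTo m a b ∧ EqCardUpTo n (s \ a) (t \ b) := by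
  rcases h.encard_eq_or_le with ⟨hst, hs⟩ | ⟨hs, ht⟩
  · obtain ⟨b, hbt, hb⟩ := exists_subset_encard_eq ((encard_le_encard has).trans hst.le)
    have hdiff : (s \ a).encard = (t \ b).encard := by
      refine ENat.add_left_injective_of_ne_top (hs.subset has).encard_lt_top.ne ?_
      simp only [encard_sdiff_add_encard_of_subset has]
      rw [hst, ← hb, encard_sdiff_add_encard_of_subset hbt]
    exact ⟨b, hbt, by rw [EqCardUpTo, hb], by rw [EqCardUpTo, hdiff]⟩
  have hsum : (m : ℕ∞) + n ≤ a.encard + (s \ a).encard := by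
    rwa [add_comm a.encard, encard_sdiff_add_encard_of_subset has, ← Nat.cast_add]
  rcases le_or_gt (n : ℕ∞) (s \ a).encard with hn | hn
  · exact exists_subset_of_le hn ht a
  · have hm : (m : ℕ∞) ≤ a.encard := by
      by_contra! hm
      exact hsum.not_gt (ENat.add_lt_add hm hn)
    obtain ⟨b, hbt, hb, ha⟩ := exists_subset_of_le hm (by rwa [add_comm n m]) (s \ a)
    exact ⟨t \ b, sdiff_subset, ha, by rwa [sdiff_sdiff_cancel_left hbt]⟩

/-- One colour is split off at a time. -/
theorem exists_coloring {C : Finset K} (hC : C.Nonempty) {c : α → K} (hc : ∀ x ∈ s, c x ∈ C)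
    (h : EqCardUpTo (n * C.card) s t) :
    ∃ c' : β → K, (∀ y, c' y ∈ C) ∧
      ∀ k ∈ C, EqCardUpTo n (s ∩ c ⁻¹' {k}) (t ∩ c' ⁻¹' {k}) := by
  classical
  induction hC using Finset.Nonempty.cons_induction generalizing s t with
  | singleton k =>
    refine ⟨fun _ => k, by simp, fun l hl => ?_⟩
    obtain rfl := Finset.mem_singleton.1 hl
    have hs : s ∩ c ⁻¹' {l} = s := inter_eq_left.2 fun x hx => by simpa using hc x hx
    rw [hs, preimage_const_of_mem (mem_singleton l), inter_univ]
    simpa using h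
  | cons k C hk _ ih =>
    rw [Finset.card_cons, mul_add_one, add_comm] at h
    obtain ⟨b, hbt, hb, hdiff⟩ := h.exists_subset (inter_subset_left (t := c ⁻¹' {k}))
    obtain ⟨c', hc'C, hc'⟩ := ih (s := s \ (s ∩ c ⁻¹' {k}))
      (fun x hx => (Finset.mem_cons.1 (hc x hx.1)).resolve_left fun hxk => hx.2 ⟨hx.1, hxk⟩) hdiff
    refine ⟨b.piecewise (fun _ => k) c', fun y => ?_, fun l hl => ?_⟩
    · by_cases hy : y ∈ b <;> simp [hy, hc'C]
    rcases Finset.mem_cons.1 hl with rfl | hl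
    · convert hb using 1
      ext y
      by_cases hy : y ∈ b
      · simp [hy, hbt hy]
      · simp [hy, show c' y ≠ l from fun h => hk (h ▸ hc'C y)]
    · have hlk : l ≠ k := fun h => hk (h ▸ hl)
      convert hc' l hl using 1 <;> ext y
      · simp only [mem_inter_iff, mem_preimage, mem_singleton_iff, mem_sdiff]
        grind
      · by_cases hy : y ∈ b <;> simp [hy, hlk.symm]

end EqCardUpTo

theorem encard_image_le_of_forall_eq_imp {ι : Type*} {S : Set ι} {f : ι → α} {g : ι → β}
    (h : ∀ x ∈ S, ∀ y ∈ S, f x = f y → g x = g y) : (g '' S).encard ≤ (f '' S).encard := by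
  rcases S.eq_empty_or_nonempty with rfl | ⟨x, -⟩
  · simp
  have : Nonempty ι := ⟨x⟩
  have hmem {b : β} (hb : b ∈ g '' S) : Function.invFunOn g S b ∈ S := Function.invFunOn_mem hb
  refine encard_le_encard_of_injOn (f := f ∘ Function.invFunOn g S)
    (fun b hb => mem_image_of_mem f (hmem hb)) fun b hb b' hb' hbb' => ?_
  rw [← Function.invFunOn_eq hb, ← Function.invFunOn_eq hb']
  exact h _ (hmem hb) _ (hmem hb') hbb'

end Cardinality

section Similarity

open Set Function

variable {ι D D' K : Type*}

/-- Two assignments look alike on the variables in `S`: they give them the same colours and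
identify the same pairs of them. -/
structure SimilarOn (c : D → K) (c' : D' → K) (S : Set ι) (σ : ι → D) (σ' : ι → D') : Prop where
  color_eq : ∀ x ∈ S, c (σ x) = c' (σ' x)
  eq_iff : ∀ x ∈ S, ∀ y ∈ S, σ x = σ y ↔ σ' x = σ' y

namespace SimilarOn

variable {c : D → K} {c' : D' → K} {S : Set ι} {σ : ι → D} {σ' : ι → D'}

theorem symm (h : SimilarOn c c' S σ σ') : SimilarOn c' c S σ' σ :=
  ⟨fun x hx => (h.color_eq x hx).symm, fun x hx y hy => (h.eq_iff x hx y hy).symm⟩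

theorem mono {T : Set ι} (h : SimilarOn c c' S σ σ') (hTS : T ⊆ S) : SimilarOn c c' T σ σ' :=
  ⟨fun x hx => h.color_eq x (hTS hx), fun x hx y hy => h.eq_iff x (hTS hx) y (hTS hy)⟩

theorem update [DecidableEq ι] {x : ι} {d : D} {d' : D'} (h : SimilarOn c c' (S \ {x}) σ σ')
    (hc : c d = c' d') (heq : ∀ y ∈ S \ {x}, σ y = d ↔ σ' y = d') :
    SimilarOn c c' S (update σ x d) (update σ' x d') := by
  refine ⟨fun y hy => ?_, fun y hy z hz => ?_⟩
  · by_cases hyx : y = x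
    · subst hyx
      simpa only [update_self] using hc
    · simpa only [update_of_ne hyx] using h.color_eq y ⟨hy, hyx⟩
  · by_cases hyx : y = x <;> by_cases hzx : z = x
    · simp only [hyx, hzx]
    · subst hyx
      simpa only [update_self, update_of_ne hzx, eq_comm] using heq z ⟨hz, hzx⟩
    · subst hzx
      simpa only [update_self, update_of_ne hyx] using heq y ⟨hy, hyx⟩
    · simpa only [update_of_ne hyx, update_of_ne hzx] using h.eq_iff y ⟨hy, hyx⟩ z ⟨hz, hzx⟩

/-- If `d` is no value of `σ`, fewer than `N` values of `σ'` have its colour, so they do not exhaust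
the class of that colour. -/
theorem exists_eq_iff {N : ℕ} {d : D} (h : SimilarOn c c' S σ σ') (hS : S.encard < N)
    (hd : EqCardUpTo N (c ⁻¹' {c d}) (c' ⁻¹' {c d})) :
    ∃ d', c' d' = c d ∧ ∀ y ∈ S, σ y = d ↔ σ' y = d' := by
  by_cases! hex : ∃ y ∈ S, σ y = d
  · obtain ⟨y, hy, rfl⟩ := hex
    exact ⟨σ' y, (h.color_eq y hy).symm, fun z hz => h.eq_iff z hz y hy⟩
  let B : Set ι := {y ∈ S | c (σ y) = c d}
  have hBS : B ⊆ S := sep_subset _ _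
  have hBfin : (σ '' B).encard ≠ ⊤ :=
    ((encard_image_le σ B).trans_lt ((encard_le_encard hBS).trans_lt
      (hS.trans (ENat.natCast_lt_top N)))).ne
  have hclass : (σ '' B).encard + 1 ≤ (c ⁻¹' {c d}).encard := by
    have hdB : d ∉ σ '' B := fun ⟨y, hy, hyd⟩ => hex y (hBS hy) hyd
    rw [← encard_insert_of_notMem hdB]
    exact encard_le_encard (insert_subset rfl (image_subset_iff.2 fun y hy => hy.2))
  have hclass' : (σ' '' B).encard < (c' ⁻¹' {c d}).encard := by
    refine (encard_image_le_of_forall_eq_imp (f := σ)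
      fun x hx y hy => (h.eq_iff x (hBS hx) y (hBS hy)).1).trans_lt ?_
    rw [← ENat.add_one_le_iff hBfin]
    refine hd.le_encard (Order.add_one_le_of_lt ?_) hclass
    exact (encard_image_le σ B).trans_lt ((encard_le_encard hBS).trans_lt hS)
  obtain ⟨d', hd', hd'B⟩ := not_subset.1 fun hsub => (encard_le_encard hsub).not_gt hclass'
  refine ⟨d', hd', fun y hy => iff_of_false (hex y hy) fun hyd' => hd'B ⟨y, ⟨hy, ?_⟩, hyd'⟩⟩
  rw [h.color_eq y hy, hyd', hd']

theorem exists_update [DecidableEq ι] {N : ℕ} {x : ι} {d : D}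
    (h : SimilarOn c c' (S \ {x}) σ σ') (hS : (S \ {x}).encard < N)
    (hd : EqCardUpTo N (c ⁻¹' {c d}) (c' ⁻¹' {c d})) :
    ∃ d', c' d' = c d ∧ SimilarOn c c' S (Function.update σ x d) (Function.update σ' x d') := by
  obtain ⟨d', hc, heq⟩ := h.exists_eq_iff hS hd
  exact ⟨d', hc, h.update hc.symm heq⟩

end SimilarOn

end Similarity

/-- Every letter and every variable of the formula has index below `N`. -/
def MMF.IndicesBelow (N : ℕ) : MMF → Prop
  | .pred p x => p < N ∧ x < N
  | .prop p => p < N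
  | .eq x y => x < N ∧ y < N
  | .fls => True
  | .imp φ ψ => φ.IndicesBelow N ∧ ψ.IndicesBelow N
  | .and φ ψ => φ.IndicesBelow N ∧ ψ.IndicesBelow N
  | .or φ ψ => φ.IndicesBelow N ∧ ψ.IndicesBelow N
  | .box φ => φ.IndicesBelow N
  | .all x φ => x < N ∧ φ.IndicesBelow N
  | .ex x φ => x < N ∧ φ.IndicesBelow N

theorem MMF.indicesBelow_of_encodeMMF_lt {N : ℕ} {φ : MMF} (h : encodeMMF φ < N) :
    φ.IndicesBelow N := by
  have pair_lt {a b : ℕ} (hab : Nat.pair a b < N) : a < N ∧ b < N :=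
    ⟨(Nat.left_le_pair a b).trans_lt hab, (Nat.right_le_pair a b).trans_lt hab⟩
  induction φ with
  | pred p x => exact pair_lt (pair_lt h).2
  | prop p => exact (pair_lt h).2
  | eq x y => exact pair_lt (pair_lt h).2
  | fls => trivial
  | imp φ ψ ihφ ihψ => exact (pair_lt (pair_lt h).2).imp ihφ ihψ
  | and φ ψ ihφ ihψ => exact (pair_lt (pair_lt h).2).imp ihφ ihψ
  | or φ ψ ihφ ihψ => exact (pair_lt (pair_lt h).2).imp ihφ ihψ
  | box φ ih => exact ih (pair_lt h).2
  | all x φ ih => exact (pair_lt (pair_lt h).2).imp_right ih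
  | ex x φ ih => exact (pair_lt (pair_lt h).2).imp_right ih

/-- The elements inhabiting exactly the worlds in `τ`. -/
def habitatClass {W D : Type} (dom : W → Set D) (τ : Set W) : Set D :=
  {d | {w | d ∈ dom w} = τ}

/-- A model over the worlds `W`, without the accessibility relation: the domain of each world, and
the interpretations of the predicate letters and of the propositional letters. -/
structure MonadicModel (W D : Type) where
  dom : W → Set D
  pred : ℕ → W → D → Prop
  prop : ℕ → W → Prop

namespace MonadicModel

open Set

variable {W D D' : Type} {N : ℕ}

/-- Satisfaction in the model with accessibility relation `R`. -/
def Sat (R : W → W → Prop) (M : MonadicModel W D) (w : W) (σ : ℕ → D) (φ : MMF) : Prop :=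
  MMFSat R M.dom M.pred M.prop w σ φ

/-- The colour of an element: the worlds it inhabits, and where it has each of the first `N`
predicates. -/
def color (M : MonadicModel W D) (N : ℕ) (d : D) : Set W × (Fin N → Set W) :=
  ({w | d ∈ M.dom w}, fun p => {w | M.pred p w d})

/-- The models interpret the first `N` propositional letters alike, and their colour classes of
inhabitants of worlds have the same size as far as counting up to `N` can tell. -/
structure AgreeUpTo (N : ℕ) (M : MonadicModel W D) (M' : MonadicModel W D') : Prop where
  prop_iff : ∀ p < N, ∀ w, M.prop p w ↔ M'.prop p w
  eqCardUpTo : ∀ k : Set W × (Fin N → Set W), k.1.Nonempty →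
    EqCardUpTo N (M.color N ⁻¹' {k}) (M'.color N ⁻¹' {k})

variable {M : MonadicModel W D} {M' : MonadicModel W D'}

theorem mem_dom_iff_of_color_eq {d : D} {d' : D'} (h : M.color N d = M'.color N d') (w : W) :
    d ∈ M.dom w ↔ d' ∈ M'.dom w :=
  Set.ext_iff.1 (congrArg Prod.fst h) w

theorem pred_iff_of_color_eq {d : D} {d' : D'} (h : M.color N d = M'.color N d') {p : ℕ}
    (hp : p < N) (w : W) : M.pred p w d ↔ M'.pred p w d' :=
  Set.ext_iff.1 (congrFun (congrArg Prod.snd h) ⟨p, hp⟩) w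

namespace AgreeUpTo

theorem symm (h : AgreeUpTo N M M') : AgreeUpTo N M' M :=
  ⟨fun p hp w => (h.prop_iff p hp w).symm, fun k hk => (h.eqCardUpTo k hk).symm⟩

theorem exists_update (H : AgreeUpTo N M M') {S : Set ℕ} {x : ℕ} {σ : ℕ → D} {σ' : ℕ → D'}
    (h : SimilarOn (M.color N) (M'.color N) (S \ {x}) σ σ') (hS : (S \ {x}).encard < N) {w : W}
    {d : D} (hd : d ∈ M.dom w) :
    ∃ d' ∈ M'.dom w, SimilarOn (M.color N) (M'.color N) S
      (Function.update σ x d) (Function.update σ' x d') := by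
  obtain ⟨d', hcolor, hsim⟩ := h.exists_update hS (H.eqCardUpTo _ ⟨w, hd⟩)
  exact ⟨d', (mem_dom_iff_of_color_eq hcolor w).2 hd, hsim⟩

theorem exists_update_Iio (H : AgreeUpTo N M M') {x : ℕ} (hx : x < N) {σ : ℕ → D} {σ' : ℕ → D'}
    (h : SimilarOn (M.color N) (M'.color N) (Iio N) σ σ') {w : W} {d : D} (hd : d ∈ M.dom w) :
    ∃ d' ∈ M'.dom w, SimilarOn (M.color N) (M'.color N) (Iio N)
      (Function.update σ x d) (Function.update σ' x d') := by
  refine H.exists_update (h.mono sdiff_subset) ?_ hd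
  rw [← ENat.add_one_le_iff ((finite_Iio N).sdiff.encard_lt_top.ne),
    encard_sdiff_singleton_add_one (mem_Iio.2 hx), ← Finset.coe_Iio,
    encard_coe_eq_coe_finsetCard, Nat.card_Iio]

/-- The values are matched one variable at a time. -/
theorem exists_assignment (H : AgreeUpTo N M M') (hN : 0 < N) {w : W} {σ : ℕ → D}
    (hσ : ∀ x, σ x ∈ M.dom w) (S : Finset ℕ) (hS : S.card ≤ N) :
    ∃ σ' : ℕ → D', (∀ x, σ' x ∈ M'.dom w) ∧ SimilarOn (M.color N) (M'.color N) ↑S σ σ' := by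
  induction S using Finset.induction with
  | empty =>
    obtain ⟨d', hd'⟩ := (H.eqCardUpTo (M.color N (σ 0)) ⟨w, hσ 0⟩).nonempty hN ⟨σ 0, rfl⟩
    exact ⟨fun _ => d', fun _ => (mem_dom_iff_of_color_eq hd' w).2 (hσ 0), by simp, by simp⟩
  | insert x S hx ih =>
    rw [Finset.card_insert_of_notMem hx] at hS
    obtain ⟨σ', hσ', h⟩ := ih (Nat.le_of_succ_le hS)
    have hdiff : (↑(insert x S) \ {x} : Set ℕ) = S := by
      rw [Finset.coe_insert, insert_sdiff_self_of_notMem (by simpa using hx)]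
    obtain ⟨d', hd', hsim⟩ := H.exists_update (S := ↑(insert x S)) (x := x) (by rwa [hdiff])
      (by rw [hdiff, encard_coe_eq_coe_finsetCard]; exact_mod_cast hS) (hσ x)
    refine ⟨Function.update σ' x d', fun y => ?_, by rwa [Function.update_eq_self] at hsim⟩
    rcases eq_or_ne y x with rfl | hyx
    · simpa only [Function.update_self] using hd'
    · simpa only [Function.update_of_ne hyx] using hσ' y

theorem sat_iff (R : W → W → Prop) (H : AgreeUpTo N M M') {φ : MMF} (hφ : φ.IndicesBelow N) (w : W)
    {σ : ℕ → D} {σ' : ℕ → D'} (h : SimilarOn (M.color N) (M'.color N) (Iio N) σ σ') :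
    M.Sat R w σ φ ↔ M'.Sat R w σ' φ := by
  induction φ generalizing w σ σ' with
  | pred p x => exact pred_iff_of_color_eq (h.color_eq x hφ.2) hφ.1 w
  | prop p => exact H.prop_iff p hφ w
  | eq x y => exact h.eq_iff x hφ.1 y hφ.2
  | fls => exact Iff.rfl
  | imp φ ψ ihφ ihψ => exact imp_congr (ihφ hφ.1 w h) (ihψ hφ.2 w h)
  | and φ ψ ihφ ihψ => exact and_congr (ihφ hφ.1 w h) (ihψ hφ.2 w h)
  | or φ ψ ihφ ihψ => exact or_congr (ihφ hφ.1 w h) (ihψ hφ.2 w h)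
  | box φ ih => exact forall₂_congr fun v _ => ih hφ v h
  | all x φ ih =>
    refine ⟨fun hall d' hd' => ?_, fun hall d hd => ?_⟩
    · obtain ⟨d, hd, hsim⟩ := H.symm.exists_update_Iio hφ.1 h.symm hd'
      exact (ih hφ.2 w hsim.symm).1 (hall d hd)
    · obtain ⟨d', hd', hsim⟩ := H.exists_update_Iio hφ.1 h hd
      exact (ih hφ.2 w hsim).2 (hall d' hd')
  | ex x φ ih =>
    refine ⟨fun ⟨d, hd, hsat⟩ => ?_, fun ⟨d', hd', hsat⟩ => ?_⟩
    · obtain ⟨d', hd', hsim⟩ := H.exists_update_Iio hφ.1 h hd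
      exact ⟨d', hd', (ih hφ.2 w hsim).1 hsat⟩
    · obtain ⟨d, hd, hsim⟩ := H.symm.exists_update_Iio hφ.1 h.symm hd'
      exact ⟨d, hd, (ih hφ.2 w hsim.symm).2 hsat⟩

end AgreeUpTo

theorem color_preimage_singleton (M : MonadicModel W D) (k : Set W × (Fin N → Set W)) :
    M.color N ⁻¹' {k} = habitatClass M.dom k.1 ∩ (fun d => (M.color N d).2) ⁻¹' {k.2} := by
  ext d
  simp only [mem_preimage, mem_singleton_iff, Prod.ext_iff]
  rfl

theorem exists_agreeUpTo [Finite W] {dom' : W → Set D'}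
    (h : ∀ τ : Set W, τ.Nonempty → EqCardUpTo (N * Nat.card (Fin N → Set W))
      (habitatClass M.dom τ) (habitatClass dom' τ)) :
    ∃ pred' : ℕ → W → D' → Prop, AgreeUpTo N M ⟨dom', pred', M.prop⟩ := by
  have := Fintype.ofFinite (Fin N → Set W)
  have hcolor (τ : Set W) (hτ : τ.Nonempty) : ∃ c' : D' → (Fin N → Set W), ∀ k, EqCardUpTo N
      (habitatClass M.dom τ ∩ (fun d => (M.color N d).2) ⁻¹' {k})
      (habitatClass dom' τ ∩ c' ⁻¹' {k}) := by
    have hτT := h τ hτ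
    rw [Nat.card_eq_fintype_card, ← Finset.card_univ] at hτT
    obtain ⟨c', -, hc'⟩ := hτT.exists_coloring Finset.univ_nonempty
      (c := fun d => (M.color N d).2) fun _ _ => Finset.mem_univ _
    exact ⟨c', fun k => hc' k (Finset.mem_univ k)⟩
  choose c' hc' using hcolor
  refine ⟨fun p w d => ∃ (hp : p < N) (hτ : {w | d ∈ dom' w}.Nonempty), w ∈ c' _ hτ d ⟨p, hp⟩,
    fun _ _ _ => Iff.rfl, fun ⟨τ, k⟩ hτ => ?_⟩
  rw [color_preimage_singleton]
  convert hc' τ hτ k using 1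
  rw [color_preimage_singleton]
  ext d
  refine and_congr_right fun hd => ?_
  have hd : {w | d ∈ dom' w} = τ := hd
  subst hd
  have hpred : (color ⟨dom', fun p w d => ∃ (hp : p < N) (hτ : {w | d ∈ dom' w}.Nonempty),
      w ∈ c' _ hτ d ⟨p, hp⟩, M.prop⟩ N d).2 = c' _ hτ d := by
    ext p w
    simp [color, hτ]
  rw [mem_preimage, mem_preimage, hpred]

end MonadicModel

section PrimitiveRecursion

variable {α β : Type*} [Primcodable α] [Primcodable β]

theorem primrecPred_eq_const {f : α → β} (hf : Primrec f) (b : β) : PrimrecPred fun a => f a = b :=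
  Primrec.eq.comp hf (Primrec.const b)

theorem primrecRel_list_mem : PrimrecRel fun (a : α) (l : List α) => a ∈ l := by
  have h : PrimrecRel fun (l : List α) (a : α) => ∃ b ∈ l, b = a :=
    PrimrecRel.exists_mem_list Primrec.eq
  exact (h.comp Primrec.snd Primrec.fst).of_eq fun x => by simp only [exists_eq_right]

theorem primrec_list_singleton : Primrec fun a : α => [a] :=
  Primrec.list_cons.comp Primrec.id (Primrec.const [])

theorem primrec_list_product : Primrec₂ fun (l : List α) (l' : List β) => l ×ˢ l' :=
  Primrec.list_flatMap Primrec.fst <| Primrec.list_map (Primrec.snd.comp Primrec.fst) <|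
    Primrec.pair (Primrec.snd.comp Primrec.fst) Primrec.snd

theorem primrec_list_sublists' : Primrec (List.sublists' : List α → List (List α)) := by
  have hstep : Primrec₂ fun (_ : List α) (x : α × List (List α)) =>
      x.2 ++ x.2.map (List.cons x.1) :=
    Primrec.list_append.comp (Primrec.snd.comp Primrec.snd) <|
      Primrec.list_map (Primrec.snd.comp Primrec.snd) <|
        Primrec.list_cons.comp (Primrec.fst.comp (Primrec.snd.comp Primrec.fst)) Primrec.snd
  refine (Primrec.list_foldr Primrec.id (Primrec.const [[]]) hstep).of_eq fun l => ?_
  induction l with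
  | nil => rfl
  | cons a l ih => simp only [List.sublists'_cons, ← ih, id, List.foldr_cons]

/-- Course-of-values recursion for predicates: `C` computes the truth value at `a` from those at the
children of `a`. -/
theorem primrecPred_of_forall_iff_map_children {p : α → Prop} [DecidablePred p] {m : α → ℕ}
    {children : α → List α} {C : α → List Bool → Prop} (hm : Primrec m)
    (hchildren : Primrec children) (hC : PrimrecPred fun x : α × List Bool => C x.1 x.2)
    (hlt : ∀ a, ∀ b ∈ children a, m b < m a)
    (hp : ∀ a, p a ↔ C a ((children a).map fun b => decide (p b))) : PrimrecPred p := by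
  classical
  refine ⟨inferInstance, Primrec.nat_omega_rec' _ (g := fun a L => some (decide (C a L))) hm
    hchildren (Primrec.option_some.comp hC.decide) hlt fun a => ?_⟩
  simp only [hp a]

end PrimitiveRecursion

section Codes

/-- The tag and the payload of `n` are of the shape that `encodeMMF` produces. -/
def IsCodeHead (n : ℕ) : Prop :=
  n.unpair.1 < 10 ∧ (n.unpair.1 ≠ 3 ∨ n.unpair.2 = 0)

/-- The codes of the immediate subformulas. -/
def subcodes (n : ℕ) : List ℕ :=
  if n.unpair.1 < 4 then []
  else if n.unpair.1 < 7 then [n.unpair.2.unpair.1, n.unpair.2.unpair.2]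
  else if n.unpair.1 = 7 then [n.unpair.2]
  else [n.unpair.2.unpair.2]

theorem encodeMMF_injective : Function.Injective encodeMMF := by
  intro φ
  induction φ <;> intro χ h <;> cases χ <;> simp_all [encodeMMF, Nat.pair_eq_pair] <;> grind

theorem unpair_snd_lt {n : ℕ} (h : n.unpair.1 ≠ 0) : n.unpair.2 < n := by
  calc n.unpair.2 < Nat.pair n.unpair.1 n.unpair.2 := by
        rw [Nat.pair]
        split_ifs <;> nlinarith [Nat.pos_of_ne_zero h]
    _ = n := Nat.pair_unpair n

theorem lt_of_mem_subcodes {n m : ℕ} (h : m ∈ subcodes n) : m < n := by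
  have hleft := Nat.unpair_left_le n.unpair.2
  have hright := Nat.unpair_right_le n.unpair.2
  unfold subcodes at h
  split_ifs at h with h4 h7 h8
  · simp at h
  all_goals
    have hlt : n.unpair.2 < n := unpair_snd_lt (by omega)
    simp only [List.mem_cons, List.not_mem_nil, or_false] at h
    omega

theorem mem_range_encodeMMF_iff (n : ℕ) :
    n ∈ Set.range encodeMMF ↔ IsCodeHead n ∧ ∀ m ∈ subcodes n, m ∈ Set.range encodeMMF := by
  refine ⟨?_, fun ⟨⟨htag, hfls⟩, hsub⟩ => ?_⟩
  · rintro ⟨φ, rfl⟩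
    cases φ <;> simp [encodeMMF, IsCodeHead, subcodes]
  obtain ⟨t, p, rfl⟩ : ∃ t p, n = Nat.pair t p := ⟨_, _, (Nat.pair_unpair n).symm⟩
  obtain ⟨x, y, rfl⟩ : ∃ x y, p = Nat.pair x y := ⟨_, _, (Nat.pair_unpair p).symm⟩
  simp only [Nat.unpair_pair] at htag hfls
  interval_cases t <;>
    simp only [subcodes, Nat.unpair_pair, List.forall_mem_cons, reduceIte, Nat.reduceLT,
      Nat.reduceEqDiff] at hsub
  · exact ⟨.pred x y, rfl⟩
  · exact ⟨.prop _, rfl⟩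
  · exact ⟨.eq x y, rfl⟩
  · exact ⟨.fls, congrArg (Nat.pair 3) (hfls.resolve_left (by simp)).symm⟩
  · obtain ⟨⟨φ, rfl⟩, ⟨ψ, rfl⟩, -⟩ := hsub
    exact ⟨.imp φ ψ, rfl⟩
  · obtain ⟨⟨φ, rfl⟩, ⟨ψ, rfl⟩, -⟩ := hsub
    exact ⟨.and φ ψ, rfl⟩
  · obtain ⟨⟨φ, rfl⟩, ⟨ψ, rfl⟩, -⟩ := hsub
    exact ⟨.or φ ψ, rfl⟩
  · obtain ⟨⟨φ, hφ⟩, -⟩ := hsub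
    exact ⟨.box φ, congrArg (Nat.pair 7) hφ⟩
  · obtain ⟨⟨φ, rfl⟩, -⟩ := hsub
    exact ⟨.all x φ, rfl⟩
  · obtain ⟨⟨φ, rfl⟩, -⟩ := hsub
    exact ⟨.ex x φ, rfl⟩

theorem primrec_unpair_fst : Primrec fun n : ℕ => n.unpair.1 :=
  Primrec.fst.comp Primrec.unpair

theorem primrec_unpair_snd : Primrec fun n : ℕ => n.unpair.2 :=
  Primrec.snd.comp Primrec.unpair

theorem primrec_subcodes : Primrec subcodes := by
  have htag := primrec_unpair_fst
  have hpayload := primrec_unpair_snd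
  have hlast := primrec_list_singleton.comp (hpayload.comp hpayload)
  exact Primrec.ite (Primrec.nat_lt.comp htag (Primrec.const 4)) (Primrec.const []) <|
    Primrec.ite (Primrec.nat_lt.comp htag (Primrec.const 7))
      (Primrec.list_cons.comp (htag.comp hpayload) hlast) <|
    Primrec.ite (primrecPred_eq_const htag 7) (primrec_list_singleton.comp hpayload) hlast

theorem primrecPred_isCodeHead : PrimrecPred IsCodeHead :=
  (Primrec.nat_lt.comp primrec_unpair_fst (Primrec.const 10)).and <|
    (primrecPred_eq_const primrec_unpair_fst 3).not.or (primrecPred_eq_const primrec_unpair_snd 0)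

theorem primrecPred_mem_range_encodeMMF : PrimrecPred (· ∈ Set.range encodeMMF) := by
  classical
  have hC : PrimrecPred fun x : ℕ × List Bool => IsCodeHead x.1 ∧ false ∉ x.2 :=
    (primrecPred_isCodeHead.comp Primrec.fst).and
      (primrecRel_list_mem.comp (Primrec.const false) Primrec.snd).not
  refine primrecPred_of_forall_iff_map_children (m := id)
    (C := fun n L => IsCodeHead n ∧ false ∉ L) Primrec.id primrec_subcodes hC
    (fun _ _ => lt_of_mem_subcodes) fun n => ?_
  rw [mem_range_encodeMMF_iff]
  simp

end Codes

section ModelChecking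

variable {W α : Type}

/-- A finite model over the worlds `W` given by lists: which elements inhabit which worlds, where
the predicate letters hold of which elements, and where the propositional letters hold. -/
abbrev ListModel (W α : Type) : Type :=
  List (W × α) × List (ℕ × W × α) × List (ℕ × W)

/-- The domains of the worlds whose inhabitants the list gives. -/
def listDom (A : List (W × α)) (w : W) : Set α :=
  {d | (w, d) ∈ A}

/-- The model that the lists describe. -/
def ListModel.toModel (m : ListModel W α) : MonadicModel W α where
  dom := listDom m.1
  pred p w d := (p, w, d) ∈ m.2.1
  prop p w := (p, w) ∈ m.2.2

/-- The elements paired with `w` in a list. -/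
def listFiber [DecidableEq W] (A : List (W × α)) (w : W) : List α :=
  (A.filter fun a => a.1 = w).map Prod.snd

theorem mem_listFiber [DecidableEq W] {A : List (W × α)} {w : W} {d : α} :
    d ∈ listFiber A w ↔ d ∈ listDom A w := by
  simp [listFiber, listDom]

/-- A finitely supported assignment: a default value and a list of variable bindings, the first of
which takes precedence. -/
abbrev ListAssignment (α : Type) : Type :=
  α × List (ℕ × α)

namespace ListAssignment

/-- The value of a variable. -/
def eval (a : ListAssignment α) (x : ℕ) : α :=
  (a.2.lookup x).getD a.1

/-- The assignment with the variable `x` rebound to `d`. -/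
def bind (a : ListAssignment α) (x : ℕ) (d : α) : ListAssignment α :=
  (a.1, (x, d) :: a.2)

theorem eval_bind (a : ListAssignment α) (x : ℕ) (d : α) :
    (a.bind x d).eval = Function.update a.eval x d := by
  funext y
  by_cases hyx : y = x
  · simp [eval, bind, hyx]
  · simp [eval, bind, List.lookup_cons, beq_false_of_ne hyx, hyx]

end ListAssignment

/-- A formula code to be evaluated in a model at a world under an assignment. -/
abbrev EvalConfig (W α : Type) : Type :=
  ℕ × ListModel W α × W × ListAssignment α

namespace EvalConfig

abbrev code (c : EvalConfig W α) : ℕ := c.1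

abbrev model (c : EvalConfig W α) : ListModel W α := c.2.1

abbrev world (c : EvalConfig W α) : W := c.2.2.1

abbrev assignment (c : EvalConfig W α) : ListAssignment α := c.2.2.2

/-- The tag of the code, which tells the outermost connective in `encodeMMF`. -/
abbrev tag (c : EvalConfig W α) : ℕ := c.code.unpair.1

/-- What the code pairs with its tag. -/
abbrev payload (c : EvalConfig W α) : ℕ := c.code.unpair.2

/-- The code is that of a formula satisfied in the model at the world under the assignment. -/
def Holds (R : W → W → Prop) (c : EvalConfig W α) : Prop :=
  ∃ φ, encodeMMF φ = c.code ∧ c.model.toModel.Sat R c.world c.assignment.eval φ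

theorem holds_encodeMMF (R : W → W → Prop) (φ : MMF) (m : ListModel W α) (w : W)
    (a : ListAssignment α) :
    Holds R (encodeMMF φ, m, w, a) ↔ m.toModel.Sat R w a.eval φ :=
  ⟨fun ⟨_, hψ, hsat⟩ => encodeMMF_injective hψ ▸ hsat, fun hsat => ⟨φ, rfl, hsat⟩⟩

/-- The evaluations to which an evaluation reduces, where `succ w` lists the worlds accessible
from `w`: tag 7 is that of `MMF.box`, and from tag 8 on there are the quantifiers. -/
def children [DecidableEq W] (succ : W → List W) (c : EvalConfig W α) : List (EvalConfig W α) :=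
  subcodes c.code ×ˢ [c.model] ×ˢ (if c.tag = 7 then succ c.world else [c.world]) ×ˢ
    if c.tag < 8 then [c.assignment]
    else (listFiber c.model.1 c.world).map (c.assignment.bind c.payload.unpair.1)

theorem code_lt_of_mem_children [DecidableEq W] {succ : W → List W} {c c' : EvalConfig W α}
    (h : c' ∈ c.children succ) : c'.code < c.code :=
  lt_of_mem_subcodes (List.mem_product.1 h).1

/-- How a truth value is obtained from those of the children; the disjuncts are indexed by the tags
of `encodeMMF`. -/
def Combine (c : EvalConfig W α) (L : List Bool) : Prop :=
  (c.tag = 0 ∧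
    c.model.toModel.pred c.payload.unpair.1 c.world (c.assignment.eval c.payload.unpair.2)) ∨
  (c.tag = 1 ∧ c.model.toModel.prop c.payload c.world) ∨
  (c.tag = 2 ∧ c.assignment.eval c.payload.unpair.1 = c.assignment.eval c.payload.unpair.2) ∨
  (c.tag = 4 ∧ L ≠ [true, false]) ∨
  ((c.tag = 5 ∨ c.tag = 7 ∨ c.tag = 8) ∧ false ∉ L) ∨
  ((c.tag = 6 ∨ c.tag = 9) ∧ true ∈ L)

open Classical in
theorem holds_iff_combine {R : W → W → Prop} {succ : W → List W}
    (hsucc : ∀ w v, v ∈ succ w ↔ R w v) (c : EvalConfig W α) :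
    c.Holds R ↔ c.code ∈ Set.range encodeMMF ∧
      c.Combine ((c.children succ).map fun c' => decide (c'.Holds R)) := by
  obtain ⟨n, m, w, d, s⟩ := c
  by_cases hn : n ∈ Set.range encodeMMF
  swap
  · exact iff_of_false (fun ⟨φ, hφ, _⟩ => hn ⟨φ, hφ⟩) fun h => hn h.1
  obtain ⟨φ, rfl⟩ := hn
  rw [holds_encodeMMF, and_iff_right ⟨φ, rfl⟩]
  cases φ <;>
    simp [Combine, children, subcodes, encodeMMF, code, model, world, assignment, tag, payload,
      List.product_cons, List.nil_product, holds_encodeMMF, MonadicModel.Sat, MMFSat, hsucc,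
      mem_listFiber, ListModel.toModel, ListAssignment.eval_bind]

end EvalConfig

section Primrec

variable [Primcodable W] [Primcodable α]

theorem primrec_listFiber [DecidableEq W] : Primrec₂ (listFiber : List (W × α) → W → List α) :=
  have hrel : PrimrecRel fun (a : W × α) (w : W) => a.1 = w :=
    Primrec.eq.comp (Primrec.fst.comp Primrec.fst) Primrec.snd
  Primrec.list_map hrel.listFilter (Primrec.snd.comp Primrec.snd)

theorem ListAssignment.primrec_eval : Primrec₂ (eval : ListAssignment α → ℕ → α) :=
  Primrec.option_getD.comp
    (Primrec.listLookup.comp Primrec.snd (Primrec.snd.comp Primrec.fst))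
    (Primrec.fst.comp Primrec.fst)

namespace EvalConfig

theorem primrec_code : Primrec (code : EvalConfig W α → ℕ) :=
  Primrec.fst

theorem primrec_model : Primrec (model : EvalConfig W α → ListModel W α) :=
  Primrec.fst.comp Primrec.snd

theorem primrec_world : Primrec (world : EvalConfig W α → W) :=
  Primrec.fst.comp (Primrec.snd.comp Primrec.snd)

theorem primrec_assignment : Primrec (assignment : EvalConfig W α → ListAssignment α) :=
  Primrec.snd.comp (Primrec.snd.comp Primrec.snd)

theorem primrec_tag : Primrec (tag : EvalConfig W α → ℕ) :=
  primrec_unpair_fst.comp primrec_code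

theorem primrec_payload : Primrec (payload : EvalConfig W α → ℕ) :=
  primrec_unpair_snd.comp primrec_code

theorem primrec_children [DecidableEq W] {succ : W → List W} (hsucc : Primrec succ) :
    Primrec (children succ : EvalConfig W α → List (EvalConfig W α)) := by
  have hworlds : Primrec fun c : EvalConfig W α =>
      if c.tag = 7 then succ c.world else [c.world] :=
    Primrec.ite (primrecPred_eq_const primrec_tag 7) (hsucc.comp primrec_world)
      (primrec_list_singleton.comp primrec_world)
  have hbind : Primrec₂ fun (c : EvalConfig W α) (d : α) =>
      c.assignment.bind c.payload.unpair.1 d :=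
    Primrec.pair (Primrec.fst.comp (primrec_assignment.comp Primrec.fst)) <|
      Primrec.list_cons.comp
        (Primrec.pair (primrec_unpair_fst.comp (primrec_payload.comp Primrec.fst)) Primrec.snd)
        (Primrec.snd.comp (primrec_assignment.comp Primrec.fst))
  have hassignments : Primrec fun c : EvalConfig W α =>
      if c.tag < 8 then [c.assignment]
      else (listFiber c.model.1 c.world).map (c.assignment.bind c.payload.unpair.1) :=
    Primrec.ite (Primrec.nat_lt.comp primrec_tag (Primrec.const 8))
      (primrec_list_singleton.comp primrec_assignment)
      (Primrec.list_map
        (primrec_listFiber.comp (Primrec.fst.comp primrec_model) primrec_world) hbind)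
  exact primrec_list_product.comp (primrec_subcodes.comp primrec_code) <|
    primrec_list_product.comp (primrec_list_singleton.comp primrec_model) <|
      primrec_list_product.comp hworlds hassignments

theorem primrecPred_combine :
    PrimrecPred fun x : EvalConfig W α × List Bool => x.1.Combine x.2 := by
  have hlist : Primrec fun x : EvalConfig W α × List Bool => x.2 := Primrec.snd
  have hmodel := primrec_model.comp (Primrec.fst (α := EvalConfig W α) (β := List Bool))
  have hworld := primrec_world.comp (Primrec.fst (α := EvalConfig W α) (β := List Bool))
  have hpayload := primrec_payload.comp (Primrec.fst (α := EvalConfig W α) (β := List Bool))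
  have hleft := primrec_unpair_fst.comp hpayload
  have hright := primrec_unpair_snd.comp hpayload
  have heval {f : EvalConfig W α × List Bool → ℕ} (hf : Primrec f) :
      Primrec fun x : EvalConfig W α × List Bool => x.1.assignment.eval (f x) :=
    ListAssignment.primrec_eval.comp (primrec_assignment.comp Primrec.fst) hf
  have htag (k : ℕ) : PrimrecPred fun x : EvalConfig W α × List Bool => x.1.tag = k :=
    primrecPred_eq_const (primrec_tag.comp Primrec.fst) k
  have hmem (b : Bool) : PrimrecPred fun x : EvalConfig W α × List Bool => b ∈ x.2 :=
    primrecRel_list_mem.comp (Primrec.const b) hlist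
  refine ((htag 0).and ?_).or <| ((htag 1).and ?_).or <|
    ((htag 2).and <| Primrec.eq.comp (heval hleft) (heval hright)).or <|
    ((htag 4).and (primrecPred_eq_const hlist _).not).or <|
    (((htag 5).or ((htag 7).or (htag 8))).and (hmem false).not).or <|
    ((htag 6).or (htag 9)).and (hmem true)
  · exact primrecRel_list_mem.comp
      (Primrec.pair hleft (Primrec.pair hworld (heval hright)))
      (Primrec.fst.comp (Primrec.snd.comp hmodel))
  · exact primrecRel_list_mem.comp (Primrec.pair hpayload hworld)
      (Primrec.snd.comp (Primrec.snd.comp hmodel))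

theorem primrecPred_holds {R : W → W → Prop} {succ : W → List W} (hsucc : Primrec succ)
    (hR : ∀ w v, v ∈ succ w ↔ R w v) : PrimrecPred (Holds R : EvalConfig W α → Prop) := by
  classical
  exact primrecPred_of_forall_iff_map_children
    (C := fun c L => c.code ∈ Set.range encodeMMF ∧ c.Combine L) primrec_code
    (primrec_children hsucc)
    ((primrecPred_mem_range_encodeMMF.comp (primrec_code.comp Primrec.fst)).and
      primrecPred_combine)
    (fun _ _ => code_lt_of_mem_children) (holds_iff_combine hR)

end EvalConfig

end Primrec

end ModelChecking

section Transfer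

variable {W D D' : Type} {N : ℕ}

theorem MMFValid.of_eqCardUpTo [Finite W] {R : W → W → Prop} {dom : W → Set D}
    {dom' : W → Set D'} {φ : MMF} (hφ : φ.IndicesBelow N) (hN : 0 < N)
    (h : ∀ τ : Set W, τ.Nonempty → EqCardUpTo (N * Nat.card (Fin N → Set W))
      (habitatClass dom τ) (habitatClass dom' τ))
    (hvalid : MMFValid R dom φ) : MMFValid R dom' φ := by
  intro pred' prop w σ' hσ'
  obtain ⟨pred, H⟩ := MonadicModel.exists_agreeUpTo (M := ⟨dom', pred', prop⟩)
    fun τ hτ => (h τ hτ).symm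
  obtain ⟨σ, hσ, hsim⟩ := H.exists_assignment hN hσ' (Finset.range N) (Finset.card_range N).le
  rw [Finset.coe_range] at hsim
  exact (H.sat_iff R hφ w hsim).2 (hvalid pred prop w σ hσ)

theorem mmfValid_iff_of_eqCardUpTo [Finite W] (R : W → W → Prop) {dom : W → Set D}
    {dom' : W → Set D'} {φ : MMF} (hφ : φ.IndicesBelow N) (hN : 0 < N)
    (h : ∀ τ : Set W, τ.Nonempty → EqCardUpTo (N * Nat.card (Fin N → Set W))
      (habitatClass dom τ) (habitatClass dom' τ)) :
    MMFValid R dom φ ↔ MMFValid R dom' φ :=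
  ⟨.of_eqCardUpTo hφ hN h, .of_eqCardUpTo hφ hN fun τ hτ => (h τ hτ).symm⟩

end Transfer

section Truncation

variable {W D : Type}

/-- The number of elements inhabiting exactly the worlds in `τ`, truncated at `n`. -/
noncomputable def truncatedClassCard (dom : W → Set D) (n : ℕ) (τ : Set W) : ℕ :=
  (min (habitatClass dom τ).encard n).toNat

open Classical in
/-- The inhabitants of the worlds, paired with their worlds, of the frame in which every class of
elements inhabiting the same worlds is truncated at size `n`; the element `(τ, i)` is the `i`-th of
the class of `τ`. -/
noncomputable def truncatedInhabitants [Fintype W] (dom : W → Set D) (n : ℕ) :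
    List (W × Set W × ℕ) :=
  (Finset.univ.filter fun a : W × Set W => a.1 ∈ a.2).toList.flatMap fun a =>
    (List.range (truncatedClassCard dom n a.2)).map fun i => (a.1, a.2, i)

theorem mem_truncatedInhabitants [Fintype W] {dom : W → Set D} {n : ℕ} {w : W} {τ : Set W}
    {i : ℕ} : (w, τ, i) ∈ truncatedInhabitants dom n ↔ w ∈ τ ∧ i < truncatedClassCard dom n τ := by
  simp [truncatedInhabitants]

theorem habitatClass_truncatedInhabitants [Fintype W] (dom : W → Set D) (n : ℕ) {τ : Set W}
    (hτ : τ.Nonempty) : habitatClass (listDom (truncatedInhabitants dom n)) τ =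
      Prod.mk τ '' Set.Iio (truncatedClassCard dom n τ) := by
  ext ⟨τ', i⟩
  have hhabitat : {w | (τ', i) ∈ listDom (truncatedInhabitants dom n) w} =
      {w | w ∈ τ' ∧ i < truncatedClassCard dom n τ'} :=
    Set.ext fun w => mem_truncatedInhabitants
  simp only [habitatClass, Set.mem_ofPred_eq, hhabitat, Set.mem_image, Set.mem_Iio, Prod.mk.injEq]
  constructor
  · rintro rfl
    obtain ⟨w, -, hi⟩ := hτ
    simp [hi]
  · rintro ⟨j, hj, rfl, rfl⟩
    simp [hj]

theorem eqCardUpTo_habitatClass_truncatedInhabitants [Fintype W] (dom : W → Set D) (n : ℕ)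
    {τ : Set W} (hτ : τ.Nonempty) : EqCardUpTo n (habitatClass dom τ)
      (habitatClass (listDom (truncatedInhabitants dom n)) τ) := by
  have hcard : (truncatedClassCard dom n τ : ℕ∞) = min (habitatClass dom τ).encard n :=
    ENat.natCast_toNat ((min_le_right _ _).trans_lt (ENat.natCast_lt_top n)).ne
  rw [EqCardUpTo, habitatClass_truncatedInhabitants dom n hτ,
    (Prod.mk_right_injective τ).encard_image, ← Finset.coe_Iio, Set.encard_coe_eq_coe_finsetCard,
    Nat.card_Iio, hcard, min_assoc, min_self]

theorem primrec_truncatedClassCard [Finite W] [Primcodable (Set W)] (dom : W → Set D) :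
    Primrec₂ (truncatedClassCard dom) := by
  classical
  have hinfinite : PrimrecPred fun τ : Set W => (habitatClass dom τ).encard = ⊤ :=
    ⟨inferInstance, Primrec.dom_finite _⟩
  have hcard : Primrec fun τ : Set W => (habitatClass dom τ).encard.toNat := Primrec.dom_finite _
  have h : Primrec₂ fun (n : ℕ) (τ : Set W) => if (habitatClass dom τ).encard = ⊤ then n
      else min (habitatClass dom τ).encard.toNat n :=
    Primrec.ite (hinfinite.comp Primrec.snd) Primrec.fst
      (Primrec.nat_min.comp (hcard.comp Primrec.snd) Primrec.fst)
  refine h.of_eq fun n τ => ?_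
  rw [truncatedClassCard]
  split_ifs with htop
  · simp [htop]
  · obtain ⟨j, hj⟩ := ENat.ne_top_iff_exists.1 htop
    rw [← hj, ← (Nat.mono_cast (α := ℕ∞)).map_min, ENat.toNat_natCast, ENat.toNat_natCast]

theorem primrec_truncatedInhabitants [Fintype W] [Primcodable W] [Primcodable (Set W)]
    (dom : W → Set D) : Primrec (truncatedInhabitants dom) := by
  refine Primrec.list_flatMap (Primrec.const _) (Primrec.list_map (Primrec.list_range.comp
    ((primrec_truncatedClassCard dom).comp Primrec.fst (Primrec.snd.comp Primrec.snd))) ?_)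
  exact Primrec.pair (Primrec.fst.comp (Primrec.snd.comp Primrec.fst))
    (Primrec.pair (Primrec.snd.comp (Primrec.snd.comp Primrec.fst)) Primrec.snd)

end Truncation

section Enumeration

open Set

variable {W D α : Type} {N : ℕ}

/-- The assignments with values in `l` and with bindings only for the first `N` variables. -/
def listAssignments (N : ℕ) (l : List α) : List (ListAssignment α) :=
  l ×ˢ (List.range N ×ˢ l).sublists'

theorem eval_mem_of_mem_listAssignments {l : List α} {a : ListAssignment α}
    (ha : a ∈ listAssignments N l) (x : ℕ) : a.eval x ∈ l := by
  obtain ⟨hdefault, hbindings⟩ := List.mem_product.1 ha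
  unfold ListAssignment.eval
  rcases hlookup : a.2.lookup x with _ | d
  · exact hdefault
  · obtain ⟨s, t, hst, -⟩ := List.lookup_eq_some_iff.1 hlookup
    have hmem : (x, d) ∈ a.2 := by simp [hst]
    exact (List.mem_product.1 ((List.mem_sublists'.1 hbindings).subset hmem)).2

theorem exists_mem_listAssignments_eval_eq {l : List α} {σ : ℕ → α} (hσ : ∀ x, σ x ∈ l) :
    ∃ a ∈ listAssignments N l, ∀ x < N, a.eval x = σ x := by
  classical
  let s := (List.range N ×ˢ l).filter fun b => b.2 = σ b.1
  have hs {x : ℕ} {d : α} : (x, d) ∈ s ↔ x < N ∧ d = σ x := by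
    simp only [s, List.mem_filter, List.mem_product, List.mem_range, decide_eq_true_eq]
    exact ⟨fun h => ⟨h.1.1, h.2⟩, fun h => ⟨⟨h.1, h.2 ▸ hσ x⟩, h.2⟩⟩
  refine ⟨(σ 0, s), List.mem_product.2 ⟨hσ 0, List.mem_sublists'.2 List.filter_sublist⟩,
    fun x hx => ?_⟩
  unfold ListAssignment.eval
  rcases hlookup : s.lookup x with _ | d
  · simpa using List.lookup_eq_none_iff.1 hlookup (x, σ x) (hs.2 ⟨hx, rfl⟩)
  · obtain ⟨t, u, htu, -⟩ := List.lookup_eq_some_iff.1 hlookup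
    have hmem : (x, d) ∈ s := by simp [htu]
    exact (hs.1 hmem).2

/-- The models in which the list `A` gives the inhabitants of the worlds and in which only the
first `N` letters of each kind hold anywhere. -/
noncomputable def listModels [Fintype W] (N : ℕ) (A : List (W × α)) : List (ListModel W α) :=
  [A] ×ˢ (List.range N ×ˢ Finset.univ.toList ×ˢ A.map Prod.snd).sublists' ×ˢ
    (List.range N ×ˢ Finset.univ.toList).sublists'

theorem dom_of_mem_listModels [Fintype W] {A : List (W × α)} {m : ListModel W α}
    (hm : m ∈ listModels N A) : m.toModel.dom = listDom A := by
  rw [← List.mem_singleton.1 (List.mem_product.1 hm).1]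
  rfl

theorem exists_mem_listModels [Fintype W] (A : List (W × α)) (M : MonadicModel W α)
    (hM : M.dom = listDom A) : ∃ m ∈ listModels N A,
      (∀ p < N, ∀ w, M.prop p w ↔ m.toModel.prop p w) ∧
      ∀ v, ∀ d ∈ M.dom v, M.color N d = m.toModel.color N d := by
  classical
  let V := (List.range N ×ˢ Finset.univ.toList ×ˢ A.map Prod.snd).filter
    fun f => M.pred f.1 f.2.1 f.2.2
  let Q := (List.range N ×ˢ Finset.univ.toList).filter fun f => M.prop f.1 f.2
  refine ⟨(A, V, Q), ?_, fun p hp w => ?_, fun v d hd => ?_⟩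
  · simp only [listModels, List.mem_product, List.mem_sublists', List.mem_singleton, true_and]
    exact ⟨List.filter_sublist, List.filter_sublist⟩
  · simp [ListModel.toModel, Q, hp]
  · have hdA : ∃ u, (u, d) ∈ A := ⟨v, (hM ▸ hd : d ∈ listDom A v)⟩
    have hpred (p : Fin N) (w : W) : M.pred p w d ↔ (↑p, w, d) ∈ V := by simp [V, hdA]
    simp only [MonadicModel.color, hM, hpred]
    rfl

namespace MonadicModel

variable {M M' : MonadicModel W D}

theorem agreeUpTo_of_color_eq (hdom : M.dom = M'.dom)
    (hprop : ∀ p < N, ∀ w, M.prop p w ↔ M'.prop p w)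
    (hcolor : ∀ v, ∀ d ∈ M.dom v, M.color N d = M'.color N d) : AgreeUpTo N M M' := by
  refine ⟨hprop, fun k ⟨v, hv⟩ => ?_⟩
  suffices h : M.color N ⁻¹' {k} = M'.color N ⁻¹' {k} by rw [EqCardUpTo, h]
  ext d
  simp only [mem_preimage, mem_singleton_iff]
  refine ⟨fun hd => hcolor v d ?_ ▸ hd, fun hd => (hcolor v d ?_).trans hd⟩
  · exact (hd ▸ hv : v ∈ (M.color N d).1)
  · rw [hdom]
    exact (hd ▸ hv : v ∈ (M'.color N d).1)

end MonadicModel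

theorem mmfValid_listDom_iff [Fintype W] [DecidableEq W] (R : W → W → Prop) (A : List (W × α))
    {φ : MMF} (hφ : φ.IndicesBelow N) :
    MMFValid R (listDom A) φ ↔ ∀ m ∈ listModels N A, ∀ w,
      ∀ a ∈ listAssignments N (listFiber A w), m.toModel.Sat R w a.eval φ := by
  constructor
  · intro hvalid m hm w a ha
    have hdom := dom_of_mem_listModels hm
    unfold MonadicModel.Sat
    rw [hdom]
    exact hvalid _ _ w _ fun x => mem_listFiber.1 (eval_mem_of_mem_listAssignments ha x)
  · intro hall pred prop w σ hσ
    obtain ⟨m, hm, hprop, hcolor⟩ := exists_mem_listModels (N := N) A ⟨listDom A, pred, prop⟩ rfl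
    obtain ⟨a, ha, haσ⟩ := exists_mem_listAssignments_eval_eq (N := N)
      fun x => mem_listFiber.2 (hσ x)
    have H := MonadicModel.agreeUpTo_of_color_eq (dom_of_mem_listModels hm).symm hprop hcolor
    refine (H.sat_iff R hφ w ⟨fun x hx => ?_, fun x hx y hy => ?_⟩).2 (hall m hm w a ha)
    · rw [haσ x hx]
      exact hcolor w _ (hσ x)
    · rw [haσ x hx, haσ y hy]

/-- The evaluations of the code `n` in the models over the inhabitants `A`, under the assignments
into the domain of the world; letters and variables from the `N`-th on are ignored. -/
noncomputable def modelCheckConfigs [Fintype W] [DecidableEq W] (A : List (W × α)) (N n : ℕ) :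
    List (EvalConfig W α) :=
  [n] ×ˢ listModels N A ×ˢ
    Finset.univ.toList.flatMap fun w => [w] ×ˢ listAssignments N (listFiber A w)

theorem mem_modelCheckConfigs [Fintype W] [DecidableEq W] {A : List (W × α)} {n : ℕ}
    {c : EvalConfig W α} : c ∈ modelCheckConfigs A N n ↔ c.code = n ∧ c.model ∈ listModels N A ∧
      c.assignment ∈ listAssignments N (listFiber A c.world) := by
  obtain ⟨k, m, w, a⟩ := c
  have hpoint : (w, a) ∈ Finset.univ.toList.flatMap
      (fun w => [w] ×ˢ listAssignments N (listFiber A w)) ↔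
        a ∈ listAssignments N (listFiber A w) := by
    simp only [List.mem_flatMap, Finset.mem_toList, Finset.mem_univ, List.mem_product,
      List.mem_singleton, true_and, exists_eq_left']
  rw [modelCheckConfigs, List.mem_product, List.mem_product, hpoint, List.mem_singleton]

theorem mmfValid_listDom_iff_forall_mem_modelCheckConfigs [Fintype W] [DecidableEq W]
    (R : W → W → Prop) (A : List (W × α)) {φ : MMF} (hφ : φ.IndicesBelow N) :
    MMFValid R (listDom A) φ ↔ ∀ c ∈ modelCheckConfigs A N (encodeMMF φ), c.Holds R := by
  simp only [mmfValid_listDom_iff R A hφ, mem_modelCheckConfigs]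
  refine ⟨?_, fun h m hm w a ha => ?_⟩
  · rintro h ⟨k, m, w, a⟩ ⟨rfl, hm, ha⟩
    exact (EvalConfig.holds_encodeMMF R φ m w a).2 (h m hm w a ha)
  · exact (EvalConfig.holds_encodeMMF R φ m w a).1 (h (encodeMMF φ, m, w, a) ⟨rfl, hm, ha⟩)

section Primrec

variable [Primcodable W] [Primcodable α]

theorem primrec_listAssignments : Primrec₂ (listAssignments : ℕ → List α → _) :=
  primrec_list_product.comp Primrec.snd <| primrec_list_sublists'.comp <|
    primrec_list_product.comp (Primrec.list_range.comp Primrec.fst) Primrec.snd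

theorem primrec_listModels [Fintype W] : Primrec₂ (listModels : ℕ → List (W × α) → _) := by
  have hrange : Primrec fun x : ℕ × List (W × α) => List.range x.1 :=
    Primrec.list_range.comp Primrec.fst
  have hworlds : Primrec fun _ : ℕ × List (W × α) => (Finset.univ : Finset W).toList :=
    Primrec.const _
  have helements : Primrec fun x : ℕ × List (W × α) => x.2.map Prod.snd :=
    Primrec.list_map Primrec.snd (Primrec.snd.comp Primrec.snd)
  exact primrec_list_product.comp (primrec_list_singleton.comp Primrec.snd) <|
    primrec_list_product.comp
      (primrec_list_sublists'.comp <| primrec_list_product.comp hrange <|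
        primrec_list_product.comp hworlds helements)
      (primrec_list_sublists'.comp <| primrec_list_product.comp hrange hworlds)

theorem primrec_modelCheckConfigs [Fintype W] [DecidableEq W] {A : ℕ → List (W × α)} {N : ℕ → ℕ}
    (hA : Primrec A) (hN : Primrec N) : Primrec fun n => modelCheckConfigs (A n) (N n) n := by
  have hpoints : Primrec₂ fun (n : ℕ) (w : W) =>
      [w] ×ˢ listAssignments (N n) (listFiber (A n) w) :=
    primrec_list_product.comp (primrec_list_singleton.comp Primrec.snd) <|
      primrec_listAssignments.comp (hN.comp Primrec.fst) <|
        primrec_listFiber.comp (hA.comp Primrec.fst) Primrec.snd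
  exact primrec_list_product.comp primrec_list_singleton <|
    primrec_list_product.comp (primrec_listModels.comp hN hA) <|
      Primrec.list_flatMap (Primrec.const _) hpoints

end Primrec

end Enumeration

theorem primrec_mul_card_fun (β : Type*) : Primrec fun n : ℕ => n * Nat.card (Fin n → β) := by
  have hpow : Primrec₂ ((· ^ ·) : ℕ → ℕ → ℕ) := Primrec₂.unpaired'.1 Nat.Primrec.pow
  exact (Primrec.nat_mul.comp Primrec.id (hpow.comp (Primrec.const (Nat.card β)) Primrec.id)).of_eq
    fun n => by simp [Nat.card_fun]

/-- The evaluations of the code `n` that decide validity in the frame with domains `dom`: a formula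
with code `n` only has indices below `n + 1`, which fixes the size of truncation. -/
noncomputable def validityConfigs {W D : Type} [Fintype W] [DecidableEq W] (dom : W → Set D)
    (n : ℕ) : List (EvalConfig W (Set W × ℕ)) :=
  modelCheckConfigs (truncatedInhabitants dom ((n + 1) * Nat.card (Fin (n + 1) → Set W))) (n + 1) n

theorem mmfValid_iff_forall_mem_validityConfigs {W D : Type} [Fintype W] [DecidableEq W]
    (R : W → W → Prop) (dom : W → Set D) (φ : MMF) :
    MMFValid R dom φ ↔ ∀ c ∈ validityConfigs dom (encodeMMF φ), c.Holds R := by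
  have hφ : φ.IndicesBelow (encodeMMF φ + 1) :=
    MMF.indicesBelow_of_encodeMMF_lt (Nat.lt_succ_self _)
  rw [mmfValid_iff_of_eqCardUpTo R hφ (Nat.succ_pos _) fun τ hτ =>
    eqCardUpTo_habitatClass_truncatedInhabitants dom _ hτ]
  exact mmfValid_listDom_iff_forall_mem_modelCheckConfigs R _ hφ

theorem exists_mmfValid_iff_forall_mem_validityConfigs {W D : Type} [Fintype W] [DecidableEq W]
    (R : W → W → Prop) (dom : W → Set D) (n : ℕ) :
    (∃ φ, encodeMMF φ = n ∧ MMFValid R dom φ) ↔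
      n ∈ Set.range encodeMMF ∧ ∀ c ∈ validityConfigs dom n, c.Holds R := by
  constructor
  · rintro ⟨φ, rfl, hvalid⟩
    exact ⟨⟨φ, rfl⟩, (mmfValid_iff_forall_mem_validityConfigs R dom φ).1 hvalid⟩
  · rintro ⟨⟨φ, rfl⟩, hholds⟩
    exact ⟨φ, rfl, (mmfValid_iff_forall_mem_validityConfigs R dom φ).2 hholds⟩

theorem primrec_validityConfigs {W D : Type} [Fintype W] [DecidableEq W] [Primcodable W]
    [Primcodable (Set W)] (dom : W → Set D) : Primrec (validityConfigs dom) :=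
  primrec_modelCheckConfigs
    ((primrec_truncatedInhabitants dom).comp ((primrec_mul_card_fun (Set W)).comp Primrec.succ))
    Primrec.succ

theorem monadic_logic_of_finite_frame_decidable_general
    {W D : Type} [Finite W] (R : W → W → Prop) (Dom : W → Set D) :
    PrimrecPred fun n : ℕ => ∃ φ : MMF, encodeMMF φ = n ∧ MMFValid R Dom φ := by
  classical
  have := Fintype.ofFinite W
  let _ : Primcodable W := Primcodable.ofEquiv _ (Fintype.equivFin W)
  let _ : Primcodable (Set W) := Primcodable.ofEquiv _ (Fintype.equivFin (Set W))
  have hholds : PrimrecPred (EvalConfig.Holds (α := Set W × ℕ) R) :=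
    EvalConfig.primrecPred_holds (succ := fun w => (Finset.univ.filter (R w)).toList)
      (Primrec.dom_finite _) fun w v => by simp
  exact (primrecPred_mem_range_encodeMMF.and
    (hholds.forall_mem_list.comp (primrec_validityConfigs Dom))).of_eq
      fun n => (exists_mmfValid_iff_forall_mem_validityConfigs R Dom n).symm

/-- the monadic fragment with equality of the modal logic of a Kripke
frame with a finite set of worlds (arbitrary accessibility relation, possibly
infinite domains) is algorithmically decidable: the set of codes of monadic modal
formulas with equality valid in the frame is a computable predicate. -/
theorem monadic_logic_of_finite_frame_decidable
    (W : Type) [Fintype W] (R : W → W → Prop) (D : Type) (Dom : W → Set D) :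
    ComputablePred (fun n : ℕ => ∃ φ : MMF, encodeMMF φ = n ∧ MMFValid R Dom φ) :=
  (monadic_logic_of_finite_frame_decidable_general R Dom).computablePred
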